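/- The eight elements ω₁, ω₂, ω₃, ω₄, η₁, η₂, η₃, η₄ form a K-basis of A, and each of them is group-like: Δ(a) = a ⊗ a and ε(a) = 1 for every element a of this basis. -/

import Mathlib

open MvPolynomial TensorProduct

/-- The defining ideal of the first example: generated by `x⁴ - 1` and
`y² - (1/2)(1 + ζx + x² - ζx³)`. -/
noncomputable def firstRelIdeal (K : Type*) [Field K] (ζ : K) :
    Ideal (MvPolynomial (Fin 2) K) :=
  Ideal.span {X 0 ^ 4 - 1,
    X 1 ^ 2 - C ((2 : K)⁻¹) * (1 + C ζ * X 0 + X 0 ^ 2 - C ζ * X 0 ^ 3)}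

/-- The first example: the commutative `K`-algebra generated by commuting elements `x`, `y`
subject to `x⁴ = 1` and `y² = (1/2)(1 + ζx + x² - ζx³)`. -/
abbrev FirstAlg (K : Type*) [Field K] (ζ : K) : Type _ :=
  MvPolynomial (Fin 2) K ⧸ firstRelIdeal K ζ

/-- The generator `x` of the first example. -/
noncomputable def xF (K : Type*) [Field K] (ζ : K) : FirstAlg K ζ :=
  Ideal.Quotient.mk (firstRelIdeal K ζ) (X 0)

/-- The generator `y` of the first example. -/
noncomputable def yF (K : Type*) [Field K] (ζ : K) : FirstAlg K ζ :=
  Ideal.Quotient.mk (firstRelIdeal K ζ) (X 1)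

/-- The group `G = ℤ/2 × ℤ/2`, written multiplicatively. -/
abbrev GG : Type := Multiplicative (ZMod 2 × ZMod 2)

/-- `g₁ = (0,0)`. -/
def g1 : GG := Multiplicative.ofAdd (0, 0)
/-- `g₂ = (1,0)`. -/
def g2 : GG := Multiplicative.ofAdd (1, 0)
/-- `g₃ = (0,1)`. -/
def g3 : GG := Multiplicative.ofAdd (0, 1)
/-- `g₄ = (1,1)`. -/
def g4 : GG := Multiplicative.ofAdd (1, 1)

/-- The twisted multiplication of `A ⊗̂ A`:
`(a ⊗ b)(a' ⊗ b') = (1/4) ∑_{g,g'} θ(g,g') (a (g.a')) ⊗ ((g'.b) b')`,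
extended bilinearly. -/
noncomputable def twMul {K : Type*} [Field K] {B : Type*} [Ring B] [Algebra K B]
    {G : Type*} [Monoid G] [Fintype G]
    (ρ : G →* (B →ₐ[K] B)) (θ : G → G → K)
    (z w : B ⊗[K] B) : B ⊗[K] B :=
  (4 : K)⁻¹ • ∑ g : G, ∑ g' : G, θ g g' •
    (TensorProduct.map (LinearMap.mul' K B) (LinearMap.mul' K B))
      ((TensorProduct.tensorTensorTensorComm K B B B B)
        ((TensorProduct.map
            (TensorProduct.map LinearMap.id (ρ g').toLinearMap)
            (TensorProduct.map (ρ g).toLinearMap LinearMap.id))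
          (z ⊗ₜ[K] w)))

/-- `ω₁ := 1`. -/
noncomputable def w1F (K : Type*) [Field K] (ζ : K) : FirstAlg K ζ := 1

/-- `ω₂ := (1/2)(1 + ιζ²)x + (1/2)(1 - ιζ²)x³`, where `ι = ξ²`. -/
noncomputable def w2F (K : Type*) [Field K] (ξ ζ : K) : FirstAlg K ζ :=
  ((2 : K)⁻¹ * (1 + ξ ^ 2 * ζ ^ 2)) • xF K ζ +
    ((2 : K)⁻¹ * (1 - ξ ^ 2 * ζ ^ 2)) • (xF K ζ ^ 3)

/-- `ω₃ := (1/2)(1 - ιζ²)x + (1/2)(1 + ιζ²)x³`, where `ι = ξ²`. -/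
noncomputable def w3F (K : Type*) [Field K] (ξ ζ : K) : FirstAlg K ζ :=
  ((2 : K)⁻¹ * (1 - ξ ^ 2 * ζ ^ 2)) • xF K ζ +
    ((2 : K)⁻¹ * (1 + ξ ^ 2 * ζ ^ 2)) • (xF K ζ ^ 3)

/-- `ω₄ := x²`. -/
noncomputable def w4F (K : Type*) [Field K] (ζ : K) : FirstAlg K ζ := xF K ζ ^ 2

/-- `η₁ := y`. -/
noncomputable def e1F (K : Type*) [Field K] (ζ : K) : FirstAlg K ζ := yF K ζ

/-- `η₂ := x³y`. -/
noncomputable def e2F (K : Type*) [Field K] (ζ : K) : FirstAlg K ζ := xF K ζ ^ 3 * yF K ζ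

/-- `η₃ := x²y`. -/
noncomputable def e3F (K : Type*) [Field K] (ζ : K) : FirstAlg K ζ := xF K ζ ^ 2 * yF K ζ

/-- `η₄ := xy`. -/
noncomputable def e4F (K : Type*) [Field K] (ζ : K) : FirstAlg K ζ := xF K ζ * yF K ζ

/-!
As a module over `K[x]/(x⁴ - 1)`, `A` is free on `1, y`; this gives the monomial basis, from which
the eight elements differ only by an invertible change of basis in the plane spanned by `x`, `x³`.

Since `φ'` fixes `x`, the powers of `Δ(x)` in `A ⊗̂ A` agree with those in the untwisted `A ⊗ A`.
With the idempotent `e = (1 + x²)/2` one has `Δ(x) = (x ⊗ x)(e ⊗ 1) + (x ⊗ x³)((1 - e) ⊗ 1)`, so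
these powers split, and `id ⊗ φ` interchanges the two coefficients. The twisted product with `y ⊗ y`
selects the `e`-part of `Δ(xⁿ)` and the `(1 - e)`-part of its image under `id ⊗ φ`, whose sum is
`(x ⊗ x)ⁿ`.
-/

section SplitPowers

variable {R : Type*} [CommRing R]

lemma mul_add_mul_one_sub_pow {e : R} (he : IsIdempotentElem e) (u v : R) (n : ℕ) :
    (u * e + v * (1 - e)) ^ n = u ^ n * e + v ^ n * (1 - e) := by
  induction n with
  | zero => ring
  | succ n ih =>
    rw [pow_succ, ih]
    linear_combination (u ^ (n + 1) + v ^ (n + 1) - u ^ n * v - v ^ n * u) * he.eq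

end SplitPowers

section LegActions

variable {K : Type*} [Field K] {B : Type*} [Ring B] [Algebra K B] {G : Type*} [Monoid G]

/-- The action of `G` on the first leg of `B ⊗ B`. -/
noncomputable def actLeft (ρ : G →* (B →ₐ[K] B)) : G →* (B ⊗[K] B →ₐ[K] B ⊗[K] B) where
  toFun g := Algebra.TensorProduct.map (ρ g) (.id K B)
  map_one' := by rw [map_one]; exact Algebra.TensorProduct.map_id
  map_mul' g h := by rw [map_mul]; exact Algebra.TensorProduct.map_comp_id _ _

/-- The action of `G` on the second leg of `B ⊗ B`. -/
noncomputable def actRight (ρ : G →* (B →ₐ[K] B)) : G →* (B ⊗[K] B →ₐ[K] B ⊗[K] B) where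
  toFun g := Algebra.TensorProduct.map (.id K B) (ρ g)
  map_one' := by rw [map_one]; exact Algebra.TensorProduct.map_id
  map_mul' g h := by rw [map_mul]; exact Algebra.TensorProduct.map_id_comp _ _

variable (ρ : G →* (B →ₐ[K] B))

@[simp]
lemma actLeft_tmul (g : G) (a b : B) : actLeft ρ g (a ⊗ₜ b) = ρ g a ⊗ₜ b := rfl

@[simp]
lemma actRight_tmul (g : G) (a b : B) : actRight ρ g (a ⊗ₜ b) = a ⊗ₜ ρ g b := rfl

lemma twMul_eq_sum [Fintype G] (θ : G → G → K) (z w : B ⊗[K] B) :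
    twMul ρ θ z w = (4 : K)⁻¹ • ∑ g, ∑ g', θ g g' • (actRight ρ g' z * actLeft ρ g w) := by
  unfold twMul
  congr! 6 with g _ g' _
  induction z with
  | zero => simp
  | add z z' hz hz' => simp only [add_tmul, map_add, add_mul, hz, hz']
  | tmul a b =>
    induction w with
    | zero => simp
    | add w w' hw hw' => simp only [tmul_add, map_add, mul_add, hw, hw']
    | tmul a' b' => simp

end LegActions

section Twist

variable {K : Type*} [Field K]

/-- A bicharacter `θ` on `ℤ/2 × ℤ/2` with `θ(g₂, g₃) = θ(g₃, g₂) = -1` and `θ(g₃, g₃) = 1`. The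
value `θ(g₂, g₂)` is left free: the twisted products computed here have a factor fixed by `g₃`,
and for these it drops out. -/
structure IsTwist (θ : GG → GG → K) : Prop where
  map_mul_right : ∀ g h h' : GG, θ g (h * h') = θ g h * θ g h'
  map_mul_left : ∀ g g' h : GG, θ (g * g') h = θ g h * θ g' h
  g2_g3 : θ g2 g3 = -1
  g3_g2 : θ g3 g2 = -1
  g3_g3 : θ g3 g3 = 1

lemma sum_GG {M : Type*} [AddCommMonoid M] (f : GG → M) :
    ∑ g, f g = f 1 + f g2 + f g3 + f (g2 * g3) := by
  have huniv : (Finset.univ : Finset GG) = {1, g2, g3, g2 * g3} := by decide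
  rw [huniv, Finset.sum_insert (by decide), Finset.sum_insert (by decide),
    Finset.sum_insert (by decide), Finset.sum_singleton, ← add_assoc, ← add_assoc]

namespace IsTwist

variable {θ : GG → GG → K}

lemma map_one_right (hθ : IsTwist θ) {g : GG} (hg : θ g g3 ≠ 0) : θ g 1 = 1 :=
  mul_left_cancel₀ hg (by rw [← hθ.map_mul_right, mul_one, mul_one])

lemma map_one_left (hθ : IsTwist θ) {g : GG} (hg : θ g3 g ≠ 0) : θ 1 g = 1 :=
  mul_left_cancel₀ hg (by rw [← hθ.map_mul_left, mul_one, mul_one])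

variable {B : Type*} [Ring B] [Algebra K B] {ρ : GG →* (B →ₐ[K] B)} {z w : B ⊗[K] B}

-- As `θ(g, 1) + θ(g, g₃)` vanishes unless `g ∈ {1, g₃}`, only those `g` contribute.
lemma twMul_of_actRight_g3 (hθ : IsTwist θ) (h2 : (2 : K) ≠ 0) (hz : actRight ρ g3 z = z) :
    twMul ρ θ z w = z * ((2 : K)⁻¹ • (w + actLeft ρ g3 w)) +
      actRight ρ g2 z * ((2 : K)⁻¹ • (w - actLeft ρ g3 w)) := by
  have h12 : θ 1 g2 = 1 := hθ.map_one_left (by simp [hθ.g3_g2])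
  have h13 : θ 1 g3 = 1 := hθ.map_one_left (by simp [hθ.g3_g3])
  have h21 : θ g2 1 = 1 := hθ.map_one_right (by simp [hθ.g2_g3])
  have h31 : θ g3 1 = 1 := hθ.map_one_right (by simp [hθ.g3_g3])
  have h11 : θ 1 1 = 1 := hθ.map_one_right (by simp [h13])
  have h4 : (4 : K) = 2 * 2 := by norm_num
  simp only [twMul_eq_sum, sum_GG, hθ.map_mul_right, hθ.map_mul_left, h11, h12, h13, h21, h31,
    hθ.g2_g3, hθ.g3_g2, hθ.g3_g3, map_one, map_mul, AlgHom.one_apply, AlgHom.mul_apply, hz,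
    mul_add, mul_sub, mul_smul_comm, h4]
  match_scalars <;> field_simp <;> ring

lemma twMul_eq_mul (hθ : IsTwist θ) (h2 : (2 : K) ≠ 0) (hz : actRight ρ g3 z = z)
    (hw : actLeft ρ g3 w = w) : twMul ρ θ z w = z * w := by
  rw [hθ.twMul_of_actRight_g3 h2 hz, hw, sub_self, smul_zero, mul_zero, add_zero, ← two_smul K,
    inv_smul_smul₀ h2]

lemma map_pow_of_fixed (hθ : IsTwist θ) (h2 : (2 : K) ≠ 0) {Δ : B →ₗ[K] B ⊗[K] B}
    (hΔ1 : Δ 1 = 1) (hΔm : ∀ a b, Δ (a * b) = twMul ρ θ (Δ a) (Δ b)) {x : B}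
    (hr : actRight ρ g3 (Δ x) = Δ x) (hl : actLeft ρ g3 (Δ x) = Δ x) (n : ℕ) :
    Δ (x ^ n) = Δ x ^ n := by
  induction n with
  | zero => rw [pow_zero, pow_zero, hΔ1]
  | succ n ih =>
    have hrn : actRight ρ g3 (Δ x ^ n) = Δ x ^ n := by rw [map_pow, hr]
    rw [pow_succ, hΔm, ih, hθ.twMul_eq_mul h2 hrn hl, pow_succ]

end IsTwist

end Twist

section Coproduct

variable {K : Type*} [Field K] {B : Type*} [CommRing B] [Algebra K B]

variable (K) in
/-- The idempotent `(1 + x²)/2` of an algebra with `x⁴ = 1`: the projector onto the eigenspace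
`x² = 1`. -/
noncomputable def evenProj (x : B) : B := (2 : K)⁻¹ • (1 + x ^ 2)

lemma isIdempotentElem_evenProj (h2 : (2 : K) ≠ 0) {x : B} (hx : x ^ 4 = 1) :
    IsIdempotentElem (evenProj K x) := by
  have hsq : (1 + x ^ 2) * (1 + x ^ 2) = (2 : K) • (1 + x ^ 2) := by
    rw [two_smul]; linear_combination hx
  rw [IsIdempotentElem, evenProj, smul_mul_smul_comm, hsq, mul_smul, inv_smul_smul₀ h2]

lemma isIdempotentElem_evenProj_tmul_one (h2 : (2 : K) ≠ 0) {x : B} (hx : x ^ 4 = 1) :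
    IsIdempotentElem (evenProj K x ⊗ₜ[K] (1 : B)) := by
  rw [IsIdempotentElem, Algebra.TensorProduct.tmul_mul_tmul, (isIdempotentElem_evenProj h2 hx).eq,
    one_mul]

/-- The value of `Δ` at the generator `x`, for an element `x` of any algebra. -/
noncomputable def xCoproduct (x : B) : B ⊗[K] B :=
  (2 : K)⁻¹ • (x ⊗ₜ[K] x + x ⊗ₜ[K] (x ^ 3) + (x ^ 3) ⊗ₜ[K] x - (x ^ 3) ⊗ₜ[K] (x ^ 3))

lemma xCoproduct_eq (h2 : (2 : K) ≠ 0) (x : B) :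
    xCoproduct x = (x ⊗ₜ[K] x) * (evenProj K x ⊗ₜ[K] 1) +
      (x ⊗ₜ[K] (x ^ 3)) * (1 - evenProj K x ⊗ₜ[K] 1) := by
  have hx3 : x * x ^ 2 = x ^ 3 := by ring
  simp only [xCoproduct, evenProj, mul_sub, mul_one, ← smul_tmul', mul_smul_comm, add_tmul,
    mul_add, ← Algebra.TensorProduct.one_def, Algebra.TensorProduct.tmul_mul_tmul, hx3]
  match_scalars <;> field_simp
  all_goals ring

lemma xCoproduct_pow (h2 : (2 : K) ≠ 0) {x : B} (hx : x ^ 4 = 1) (n : ℕ) :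
    xCoproduct x ^ n = (x ⊗ₜ[K] x) ^ n * (evenProj K x ⊗ₜ[K] 1) +
      (x ⊗ₜ[K] (x ^ 3)) ^ n * (1 - evenProj K x ⊗ₜ[K] 1) := by
  rw [xCoproduct_eq h2, mul_add_mul_one_sub_pow (isIdempotentElem_evenProj_tmul_one h2 hx)]

lemma xCoproduct_sq (h2 : (2 : K) ≠ 0) {x : B} (hx : x ^ 4 = 1) :
    xCoproduct x ^ 2 = (x ^ 2) ⊗ₜ[K] (x ^ 2) := by
  have hx6 : (x ^ 3) ^ 2 = x ^ 2 := by linear_combination x ^ 2 * hx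
  rw [xCoproduct_pow h2 hx, Algebra.TensorProduct.tmul_pow, Algebra.TensorProduct.tmul_pow, hx6,
    ← mul_add, add_sub_cancel, mul_one]

lemma xCoproduct_cube (h2 : (2 : K) ≠ 0) {x : B} (hx : x ^ 4 = 1) :
    xCoproduct x ^ 3 = (2 : K)⁻¹ • ((x ^ 3) ⊗ₜ[K] (x ^ 3) + (x ^ 3) ⊗ₜ[K] x +
      x ⊗ₜ[K] (x ^ 3) - x ⊗ₜ[K] x) := by
  have hx5 : x ^ 2 * x ^ 3 = x := by linear_combination x * hx
  have hx3 : x ^ 2 * x = x ^ 3 := by ring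
  rw [pow_succ, xCoproduct_sq h2 hx, xCoproduct, mul_smul_comm]
  simp only [mul_add, mul_sub, Algebra.TensorProduct.tmul_mul_tmul, hx3, hx5]

-- The coefficients are those of `ω₂` and `ω₃`, for which `{a, b} = {(1 + ιζ²)/2, (1 - ιζ²)/2}`.
lemma smul_xCoproduct_add_smul_cube {a b : K} (hab : a + b = 1) (hab' : 2 * (a * b) = 1) {x : B}
    (hx : x ^ 4 = 1) :
    a • xCoproduct x + b • xCoproduct x ^ 3 = (a • x + b • x ^ 3) ⊗ₜ[K] (a • x + b • x ^ 3) := by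
  have h2 : (2 : K) ≠ 0 := left_ne_zero_of_mul_eq_one hab'
  rw [xCoproduct_cube h2 hx, xCoproduct]
  simp only [add_tmul, tmul_add, ← smul_tmul', tmul_smul]
  match_scalars <;> field_simp <;> grind

variable {x : B}

lemma actLeft_xCoproduct {G : Type*} [Monoid G] {ρ : G →* (B →ₐ[K] B)} {g : G} (hg : ρ g x = x) :
    actLeft ρ g (xCoproduct x) = xCoproduct x := by
  simp [xCoproduct, hg]

lemma actRight_xCoproduct {G : Type*} [Monoid G] {ρ : G →* (B →ₐ[K] B)} {g : G} (hg : ρ g x = x) :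
    actRight ρ g (xCoproduct x) = xCoproduct x := by
  simp [xCoproduct, hg]

lemma actRight_xCoproduct_pow_of_cube (h2 : (2 : K) ≠ 0) (hx : x ^ 4 = 1) {G : Type*} [Monoid G]
    {ρ : G →* (B →ₐ[K] B)} {g : G} (hg : ρ g x = x ^ 3) (n : ℕ) :
    actRight ρ g (xCoproduct x ^ n) = (x ⊗ₜ[K] (x ^ 3)) ^ n * (evenProj K x ⊗ₜ[K] 1) +
      (x ⊗ₜ[K] x) ^ n * (1 - evenProj K x ⊗ₜ[K] 1) := by
  have hx9 : (x ^ 3) ^ 3 = x := by linear_combination (x + x ^ 5) * hx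
  simp only [xCoproduct_pow h2 hx, map_add, map_mul, map_sub, map_pow, map_one, actRight_tmul, hg,
    hx9]

variable {ρ : GG →* (B →ₐ[K] B)} {θ : GG → GG → K}

lemma twMul_xCoproduct_pow (hθ : IsTwist θ) (h2 : (2 : K) ≠ 0) (hx : x ^ 4 = 1)
    (hρ2x : ρ g2 x = x ^ 3) (hρ3x : ρ g3 x = x) {y : B} (hρ3y : ρ g3 y = x ^ 2 * y) (n : ℕ) :
    twMul ρ θ (xCoproduct x ^ n) (y ⊗ₜ[K] y) = (x ^ n * y) ⊗ₜ[K] (x ^ n * y) := by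
  have hfixed : actRight ρ g3 (xCoproduct x ^ n) = xCoproduct x ^ n := by
    rw [map_pow, actRight_xCoproduct hρ3x]
  have hplus : (2 : K)⁻¹ • (y ⊗ₜ[K] y + actLeft ρ g3 (y ⊗ₜ[K] y)) =
      (evenProj K x ⊗ₜ[K] 1) * (y ⊗ₜ[K] y) := by
    rw [actLeft_tmul, hρ3y, ← add_tmul, evenProj, Algebra.TensorProduct.tmul_mul_tmul, one_mul,
      smul_mul_assoc, add_mul, one_mul, smul_tmul']
  have hminus : (2 : K)⁻¹ • (y ⊗ₜ[K] y - actLeft ρ g3 (y ⊗ₜ[K] y)) =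
      (1 - evenProj K x ⊗ₜ[K] 1) * (y ⊗ₜ[K] y) := by
    rw [sub_mul, one_mul, ← hplus]
    match_scalars <;> field_simp
    ring
  rw [hθ.twMul_of_actRight_g3 h2 hfixed, hplus, hminus, actRight_xCoproduct_pow_of_cube h2 hx hρ2x,
    xCoproduct_pow h2 hx, ← Algebra.TensorProduct.tmul_mul_tmul, ← Algebra.TensorProduct.tmul_pow]
  linear_combination (2 * ((x ⊗ₜ[K] x) ^ n - (x ⊗ₜ[K] (x ^ 3)) ^ n) * (y ⊗ₜ[K] y)) *
    (isIdempotentElem_evenProj_tmul_one h2 hx).eq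

end Coproduct

namespace FirstAlg

section Presentation

variable {K : Type*} [Field K] {ζ : K}

lemma xF_pow_four : xF K ζ ^ 4 = 1 :=
  Ideal.Quotient.eq.2 (Ideal.subset_span (by simp))

lemma yF_sq : yF K ζ ^ 2 = (2 : K)⁻¹ • (1 + ζ • xF K ζ + xF K ζ ^ 2 - ζ • xF K ζ ^ 3) := by
  simp only [Algebra.smul_def (A := FirstAlg K ζ)]
  exact Ideal.Quotient.eq.2 (Ideal.subset_span (by simp))

variable {T : Type*} [CommRing T] [Algebra K T]

/-- The universal property of the presentation: elements `a`, `b` satisfying the defining relations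
induce a homomorphism with `x ↦ a` and `y ↦ b`. -/
noncomputable def lift (a b : T) (ha : a ^ 4 = 1)
    (hb : b ^ 2 = (2 : K)⁻¹ • (1 + ζ • a + a ^ 2 - ζ • a ^ 3)) : FirstAlg K ζ →ₐ[K] T :=
  Ideal.Quotient.liftₐ (firstRelIdeal K ζ) (aeval ![a, b]) fun p hp => by
    have hle : firstRelIdeal K ζ ≤ RingHom.ker (aeval (R := K) ![a, b]) := by
      rw [firstRelIdeal, Ideal.span_le]
      rintro q (rfl | rfl) <;> simp [RingHom.mem_ker, ha, hb, Algebra.smul_def]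
    exact hle hp

@[simp]
lemma lift_xF {a b : T} (ha : a ^ 4 = 1)
    (hb : b ^ 2 = (2 : K)⁻¹ • (1 + ζ • a + a ^ 2 - ζ • a ^ 3)) : lift a b ha hb (xF K ζ) = a :=
  aeval_X _ 0

@[simp]
lemma lift_yF {a b : T} (ha : a ^ 4 = 1)
    (hb : b ^ 2 = (2 : K)⁻¹ • (1 + ζ • a + a ^ 2 - ζ • a ^ 3)) : lift a b ha hb (yF K ζ) = b :=
  aeval_X _ 1

lemma algHom_ext {f g : FirstAlg K ζ →ₐ[K] T} (hx : f (xF K ζ) = g (xF K ζ))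
    (hy : f (yF K ζ) = g (yF K ζ)) : f = g :=
  Ideal.Quotient.algHom_ext K <| MvPolynomial.algHom_ext fun i => by
    fin_cases i
    exacts [hx, hy]

end Presentation

section Basis

variable (K : Type*) [Field K] (ζ : K)

/-- The algebra `K[x]/(x⁴ - 1)`, over which the first example is free of rank two. -/
abbrev XAlg : Type _ := AdjoinRoot (Polynomial.X ^ 4 - Polynomial.C 1 : Polynomial K)

/-- The generator `x` of `K[x]/(x⁴ - 1)`. -/
noncomputable abbrev xRoot : XAlg K := AdjoinRoot.root _

variable {K}

lemma xRoot_pow_four : xRoot K ^ 4 = 1 := by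
  have h := AdjoinRoot.mk_self (f := (Polynomial.X ^ 4 - Polynomial.C 1 : Polynomial K))
  rwa [map_sub, map_pow, AdjoinRoot.mk_X, map_one, map_one, sub_eq_zero] at h

/-- The right-hand side of the relation for `y²`, as an element of `K[x]/(x⁴ - 1)`. -/
noncomputable def ySq : XAlg K :=
  (2 : K)⁻¹ • (1 + ζ • xRoot K + xRoot K ^ 2 - ζ • xRoot K ^ 3)

/-- The first example as an iterated extension: a square root of `ySq ζ` is adjoined to
`K[x]/(x⁴ - 1)`. -/
abbrev TowerAlg : Type _ := AdjoinRoot (Polynomial.X ^ 2 - Polynomial.C (ySq ζ))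

variable {ζ} in
lemma map_ySq {T : Type*} [CommRing T] [Algebra K T] (f : XAlg K →ₐ[K] T) :
    f (ySq ζ) = (2 : K)⁻¹ •
      (1 + ζ • f (xRoot K) + f (xRoot K) ^ 2 - ζ • f (xRoot K) ^ 3) := by
  simp only [ySq, map_smul, map_add, map_sub, map_one, map_pow]

lemma towerAlg_root_sq : (AdjoinRoot.root _ : TowerAlg ζ) ^ 2 = algebraMap (XAlg K) _ (ySq ζ) := by
  have h := AdjoinRoot.mk_self (f := Polynomial.X ^ 2 - Polynomial.C (ySq ζ))
  rwa [map_sub, map_pow, AdjoinRoot.mk_X, AdjoinRoot.mk_C, sub_eq_zero] at h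

/-- The homomorphism from the presentation to the tower with `x ↦ x` and `y ↦ √(ySq ζ)`. -/
noncomputable def toTower : FirstAlg K ζ →ₐ[K] TowerAlg ζ :=
  lift (algebraMap (XAlg K) _ (xRoot K)) (AdjoinRoot.root _)
    (by rw [← map_pow, xRoot_pow_four, map_one])
    ((towerAlg_root_sq ζ).trans (map_ySq (IsScalarTower.toAlgHom K (XAlg K) (TowerAlg ζ))))

/-- The homomorphism `K[x]/(x⁴ - 1) → A`, `x ↦ x`, to the first example. -/
noncomputable def ofXAlg : XAlg K →ₐ[K] FirstAlg K ζ :=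
  AdjoinRoot.liftAlgHom _ (Algebra.ofId K _) (xF K ζ) (by
    rw [Polynomial.eval₂_sub, Polynomial.eval₂_X_pow, Polynomial.eval₂_C, map_one, xF_pow_four,
      sub_self])

@[simp]
lemma ofXAlg_xRoot : ofXAlg ζ (xRoot K) = xF K ζ := AdjoinRoot.liftAlgHom_root ..

/-- The homomorphism from the tower to the presentation with `x ↦ x` and `√(ySq ζ) ↦ y`. -/
noncomputable def ofTower : TowerAlg ζ →ₐ[K] FirstAlg K ζ :=
  AdjoinRoot.liftAlgHom _ (ofXAlg ζ) (yF K ζ) (by simp [yF_sq, map_ySq])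

/-- The tower and the presentation define the same algebra. -/
noncomputable def towerEquiv : TowerAlg ζ ≃ₐ[K] FirstAlg K ζ :=
  AlgEquiv.ofAlgHom (ofTower ζ) (toTower ζ)
    (algHom_ext (by simp [toTower, ofTower]) (by simp [toTower, ofTower]))
    (AdjoinRoot.algHom_ext'
      (AdjoinRoot.algHom_ext (by simp [toTower, ofTower, AdjoinRoot.algebraMap_eq]))
      (by simp [toTower, ofTower]))

/-- The power basis `1, x, x², x³` of `K[x]/(x⁴ - 1)`. -/
noncomputable def xAlgBasis : Module.Basis (Fin 4) K (XAlg K) :=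
  (AdjoinRoot.powerBasis' (Polynomial.monic_X_pow_sub_C (1 : K) four_ne_zero)).basis.reindex
    (finCongr Polynomial.natDegree_X_pow_sub_C)

lemma xAlgBasis_apply (i : Fin 4) : xAlgBasis i = xRoot K ^ (i : ℕ) := by
  simp only [xAlgBasis, Module.Basis.reindex_apply, PowerBasis.basis_eq_pow,
    AdjoinRoot.powerBasis'_gen]
  rfl

instance : Nontrivial (XAlg K) :=
  xAlgBasis.repr.toEquiv.nontrivial

/-- The power basis `1, √(ySq ζ)` of the tower over `K[x]/(x⁴ - 1)`. -/
noncomputable def towerAlgBasis : Module.Basis (Fin 2) (XAlg K) (TowerAlg ζ) :=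
  (AdjoinRoot.powerBasis' (Polynomial.monic_X_pow_sub_C (ySq ζ) two_ne_zero)).basis.reindex
    (finCongr Polynomial.natDegree_X_pow_sub_C)

lemma towerAlgBasis_apply (j : Fin 2) : towerAlgBasis ζ j = AdjoinRoot.root _ ^ (j : ℕ) := by
  simp only [towerAlgBasis, Module.Basis.reindex_apply, PowerBasis.basis_eq_pow,
    AdjoinRoot.powerBasis'_gen]
  rfl

/-- The monomial basis `xⁱyʲ`, `i < 4`, `j < 2`, of the first example. -/
noncomputable def monomialBasis : Module.Basis (Fin 4 × Fin 2) K (FirstAlg K ζ) :=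
  (xAlgBasis.smulTower (towerAlgBasis ζ)).map (towerEquiv ζ).toLinearEquiv

lemma monomialBasis_apply (i : Fin 4) (j : Fin 2) :
    monomialBasis ζ (i, j) = xF K ζ ^ (i : ℕ) * yF K ζ ^ (j : ℕ) := by
  simp [monomialBasis, xAlgBasis_apply, towerAlgBasis_apply, towerEquiv, ofTower,
    Algebra.smul_def, AdjoinRoot.algebraMap_eq]

/-- The family `ω₁, …, ω₄, η₁, …, η₄`, where `a` and `b` stand for the coefficients `(1 + ιζ²)/2`
and `(1 - ιζ²)/2` of `ω₂` and `ω₃`. -/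
noncomputable def groupLikes (a b : K) : Fin 8 → FirstAlg K ζ :=
  ![1, a • xF K ζ + b • xF K ζ ^ 3, b • xF K ζ + a • xF K ζ ^ 3, xF K ζ ^ 2,
    yF K ζ, xF K ζ ^ 3 * yF K ζ, xF K ζ ^ 2 * yF K ζ, xF K ζ * yF K ζ]

variable {a b : K}

lemma span_groupLikes (hab : a + b = 1) (hab' : 2 * (a * b) = 1) :
    Submodule.span K (Set.range (groupLikes ζ a b)) = ⊤ := by
  have hmem (i : Fin 8) : groupLikes ζ a b i ∈ Submodule.span K (Set.range (groupLikes ζ a b)) :=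
    Submodule.subset_span ⟨i, rfl⟩
  have hsq : a ^ 2 + b ^ 2 = 0 := by linear_combination (a + b + 1) * hab - hab'
  have hx : xF K ζ = b • groupLikes ζ a b 1 + a • groupLikes ζ a b 2 := by
    simp only [groupLikes, Matrix.cons_val]
    match_scalars
    · linear_combination -hab'
    · linear_combination -hsq
  have hx3 : xF K ζ ^ 3 = a • groupLikes ζ a b 1 + b • groupLikes ζ a b 2 := by
    simp only [groupLikes, Matrix.cons_val]
    match_scalars
    · linear_combination -hab'
    · linear_combination -hsq
  rw [eq_top_iff, ← (monomialBasis ζ).span_eq, Submodule.span_le]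
  rintro _ ⟨⟨i, j⟩, rfl⟩
  rw [monomialBasis_apply, SetLike.mem_coe]
  fin_cases i <;> fin_cases j <;> simp only [pow_zero, pow_one, mul_one, one_mul]
  · exact hmem 0
  · exact hmem 4
  · rw [hx]
    exact add_mem (Submodule.smul_mem _ _ (hmem 1)) (Submodule.smul_mem _ _ (hmem 2))
  · exact hmem 7
  · exact hmem 3
  · exact hmem 6
  · rw [hx3]
    exact add_mem (Submodule.smul_mem _ _ (hmem 1)) (Submodule.smul_mem _ _ (hmem 2))
  · exact hmem 5

lemma linearIndependent_groupLikes (hab : a + b = 1) (hab' : 2 * (a * b) = 1) :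
    LinearIndependent K (groupLikes ζ a b) :=
  linearIndependent_of_top_le_span_of_card_eq_finrank (span_groupLikes ζ hab hab').ge
    (by simp [Module.finrank_eq_card_basis (monomialBasis ζ)])

end Basis

section GroupLike

variable {K : Type*} [Field K] {ζ a b : K}

lemma counit_groupLikes (hab : a + b = 1) {ε : FirstAlg K ζ →ₐ[K] K} (hεx : ε (xF K ζ) = 1)
    (hεy : ε (yF K ζ) = 1) (i : Fin 8) : ε (groupLikes ζ a b i) = 1 := by
  fin_cases i <;> simp [groupLikes, hεx, hεy, hab, add_comm b a]

lemma coproduct_groupLikes (hab : a + b = 1) (hab' : 2 * (a * b) = 1)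
    {ρ : GG →* (FirstAlg K ζ →ₐ[K] FirstAlg K ζ)} (hρ2x : ρ g2 (xF K ζ) = xF K ζ ^ 3)
    (hρ3x : ρ g3 (xF K ζ) = xF K ζ) (hρ3y : ρ g3 (yF K ζ) = xF K ζ ^ 2 * yF K ζ)
    {θ : GG → GG → K} (hθ : IsTwist θ) {Δ : FirstAlg K ζ →ₗ[K] FirstAlg K ζ ⊗[K] FirstAlg K ζ}
    (hΔ1 : Δ 1 = 1) (hΔm : ∀ a b, Δ (a * b) = twMul ρ θ (Δ a) (Δ b))
    (hΔx : Δ (xF K ζ) = xCoproduct (xF K ζ)) (hΔy : Δ (yF K ζ) = yF K ζ ⊗ₜ[K] yF K ζ)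
    (i : Fin 8) : Δ (groupLikes ζ a b i) = groupLikes ζ a b i ⊗ₜ[K] groupLikes ζ a b i := by
  have h2 : (2 : K) ≠ 0 := left_ne_zero_of_mul_eq_one hab'
  have hx4 : xF K ζ ^ 4 = 1 := xF_pow_four
  have hΔpow (n : ℕ) : Δ (xF K ζ ^ n) = xCoproduct (xF K ζ) ^ n := by
    rw [← hΔx]
    exact hθ.map_pow_of_fixed h2 hΔ1 hΔm (by rw [hΔx, actRight_xCoproduct hρ3x])
      (by rw [hΔx, actLeft_xCoproduct hρ3x]) n
  have hΔpow_mul (n : ℕ) :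
      Δ (xF K ζ ^ n * yF K ζ) = (xF K ζ ^ n * yF K ζ) ⊗ₜ[K] (xF K ζ ^ n * yF K ζ) := by
    rw [hΔm, hΔpow, hΔy, twMul_xCoproduct_pow hθ h2 hx4 hρ2x hρ3x hρ3y]
  have hΔlin {c d : K} (hcd : c + d = 1) (hcd' : 2 * (c * d) = 1) :
      Δ (c • xF K ζ + d • xF K ζ ^ 3) =
        (c • xF K ζ + d • xF K ζ ^ 3) ⊗ₜ[K] (c • xF K ζ + d • xF K ζ ^ 3) := by
    rw [map_add, map_smul, map_smul, hΔx, hΔpow, smul_xCoproduct_add_smul_cube hcd hcd' hx4]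
  fin_cases i
  · exact hΔ1
  · exact hΔlin hab hab'
  · exact hΔlin (by rwa [add_comm]) (by rwa [mul_comm b])
  · exact (hΔpow 2).trans (xCoproduct_sq h2 hx4)
  · exact hΔy
  · exact hΔpow_mul 3
  · exact hΔpow_mul 2
  · have hΔxy := hΔpow_mul 1
    rw [pow_one] at hΔxy
    exact hΔxy

end GroupLike

end FirstAlg

-- `κ` plays the role of `ιζ²`.
theorem stmt_8_general {K : Type*} [Field K] (h2 : (2 : K) ≠ 0) {κ : K} (hκ : κ ^ 2 = -1) {ζ : K}
    {ρ : GG →* (FirstAlg K ζ →ₐ[K] FirstAlg K ζ)} (hρ2x : ρ g2 (xF K ζ) = xF K ζ ^ 3)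
    (hρ3x : ρ g3 (xF K ζ) = xF K ζ) (hρ3y : ρ g3 (yF K ζ) = xF K ζ ^ 2 * yF K ζ)
    {θ : GG → GG → K} (hθ : IsTwist θ) {Δ : FirstAlg K ζ →ₗ[K] FirstAlg K ζ ⊗[K] FirstAlg K ζ}
    (hΔ1 : Δ 1 = 1) (hΔm : ∀ a b, Δ (a * b) = twMul ρ θ (Δ a) (Δ b))
    (hΔx : Δ (xF K ζ) = xCoproduct (xF K ζ)) (hΔy : Δ (yF K ζ) = yF K ζ ⊗ₜ[K] yF K ζ)
    {ε : FirstAlg K ζ →ₐ[K] K} (hεx : ε (xF K ζ) = 1) (hεy : ε (yF K ζ) = 1)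
    {v : Fin 8 → FirstAlg K ζ}
    (hv : v = FirstAlg.groupLikes ζ ((2 : K)⁻¹ * (1 + κ)) ((2 : K)⁻¹ * (1 - κ))) :
    LinearIndependent K v ∧ Submodule.span K (Set.range v) = ⊤ ∧
      ∀ i : Fin 8, Δ (v i) = v i ⊗ₜ[K] v i ∧ ε (v i) = 1 := by
  have hab : (2 : K)⁻¹ * (1 + κ) + (2 : K)⁻¹ * (1 - κ) = 1 := by
    field_simp
    ring
  have hab' : 2 * ((2 : K)⁻¹ * (1 + κ) * ((2 : K)⁻¹ * (1 - κ))) = 1 := by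
    field_simp
    linear_combination -hκ
  subst hv
  exact ⟨FirstAlg.linearIndependent_groupLikes ζ hab hab', FirstAlg.span_groupLikes ζ hab hab',
    fun i => ⟨FirstAlg.coproduct_groupLikes hab hab' hρ2x hρ3x hρ3y hθ hΔ1 hΔm hΔx hΔy i,
      FirstAlg.counit_groupLikes hab hεx hεy i⟩⟩

theorem stmt_8 {K : Type*} [Field K] (ξ : K) (hξ : IsPrimitiveRoot ξ 8)
    (ζ : K) (hζ : ζ ^ 4 = 1)
    (ρ : GG →* (FirstAlg K ζ →ₐ[K] FirstAlg K ζ))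
    (hρ2x : ρ g2 (xF K ζ) = xF K ζ ^ 3) (hρ2y : ρ g2 (yF K ζ) = xF K ζ ^ 3 * yF K ζ)
    (hρ3x : ρ g3 (xF K ζ) = xF K ζ) (hρ3y : ρ g3 (yF K ζ) = xF K ζ ^ 2 * yF K ζ)
    (θ : GG → GG → K)
    (hθr : ∀ g h h' : GG, θ g (h * h') = θ g h * θ g h')
    (hθl : ∀ g g' h : GG, θ (g * g') h = θ g h * θ g' h)
    (hθ22 : θ g2 g2 = ζ ^ 2) (hθ23 : θ g2 g3 = -1)
    (hθ32 : θ g3 g2 = -1) (hθ33 : θ g3 g3 = 1)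
    -- the coproduct `Δ : A → A ⊗̂ A`, an algebra homomorphism with
    -- `Δ(x) = (1/2)(x ⊗ x + x ⊗ x³ + x³ ⊗ x - x³ ⊗ x³)` and `Δ(y) = y ⊗ y`
    (Δ : FirstAlg K ζ →ₗ[K] FirstAlg K ζ ⊗[K] FirstAlg K ζ)
    (hΔ1 : Δ 1 = (1 : FirstAlg K ζ) ⊗ₜ[K] (1 : FirstAlg K ζ))
    (hΔm : ∀ a b : FirstAlg K ζ, Δ (a * b) = twMul ρ θ (Δ a) (Δ b))
    (hΔx : Δ (xF K ζ) = (2 : K)⁻¹ •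
      ((xF K ζ) ⊗ₜ[K] (xF K ζ) + (xF K ζ) ⊗ₜ[K] (xF K ζ ^ 3) +
        (xF K ζ ^ 3) ⊗ₜ[K] (xF K ζ) - (xF K ζ ^ 3) ⊗ₜ[K] (xF K ζ ^ 3)))
    (hΔy : Δ (yF K ζ) = (yF K ζ) ⊗ₜ[K] (yF K ζ))
    -- the counit `ε : A → K` with `ε(x) = ε(y) = 1`
    (ε : FirstAlg K ζ →ₐ[K] K)
    (hεx : ε (xF K ζ) = 1) (hεy : ε (yF K ζ) = 1)
    (v : Fin 8 → FirstAlg K ζ)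
    (hv : v = ![w1F K ζ, w2F K ξ ζ, w3F K ξ ζ, w4F K ζ,
        e1F K ζ, e2F K ζ, e3F K ζ, e4F K ζ]) :
    LinearIndependent K v ∧ Submodule.span K (Set.range v) = ⊤ ∧
      ∀ i : Fin 8, Δ (v i) = (v i) ⊗ₜ[K] (v i) ∧ ε (v i) = 1 := by
  have hξ4 : ξ ^ 4 = -1 := (hξ.pow (by decide) (by decide : 8 = 4 * 2)).eq_neg_one_of_two_right
  have h2 : (2 : K) ≠ 0 := fun h => hξ.pow_ne_one_of_pos_of_lt (l := 4) (by decide) (by decide)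
    (by linear_combination hξ4 - h)
  have hκ : (ξ ^ 2 * ζ ^ 2) ^ 2 = -1 := by linear_combination ζ ^ 4 * hξ4 - hζ
  exact stmt_8_general h2 hκ hρ2x hρ3x hρ3y ⟨hθr, hθl, hθ23, hθ32, hθ33⟩ hΔ1 hΔm hΔx hΔy hεx hεy hv
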